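/- Let f(x) = a·x² + b·x + c with a ≥ 1 and b, c ≥ 0, and let n ≥ 2. For all consecutive vertices v_{i−1}, v_i of the q-Jaco graph J_n(f) (with 2 ≤ i ≤ n), the degrees in the underlying graph J*_n(f) satisfy |d(v_i) − d(v_{i−1})| ≤ a·(2i − 1) + b. -/

import Mathlib

/-- In-degree of vertex `v_j` in the (root) Jaco graph with incidence function `f`:
`d⁻(v_j) = |{ i : 1 ≤ i < j, i + f i − d⁻(v_i) ≥ j }|`. -/
noncomputable def jacoIn (f : ℕ → ℕ) (j : ℕ) : ℕ :=
  Nat.strongRecOn j (fun j ih =>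
    (((Finset.Ico 1 j).attach).filter (fun i : {x // x ∈ Finset.Ico 1 j} =>
      j ≤ i.1 + f i.1 - ih i.1 (Finset.mem_Ico.mp i.2).2)).card)

/-- The arc `(v_i, v_j)` is present in the Jaco graph iff `1 ≤ i < j` and
`i + f i − d⁻(v_i) ≥ j`. -/
def jacoArc (f : ℕ → ℕ) (i j : ℕ) : Prop :=
  1 ≤ i ∧ i < j ∧ j ≤ i + f i - jacoIn f i

noncomputable instance (f : ℕ → ℕ) (i j : ℕ) : Decidable (jacoArc f i j) := by
  unfold jacoArc; infer_instance

/-- The underlying undirected simple graph `J*_n(f)` of the finite Jaco graph `J_n(f)`,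
on vertex set `{v_1, …, v_n}` (vertex `x : Fin n` represents `v_{x+1}`). -/
def jacoGraph (f : ℕ → ℕ) (n : ℕ) : SimpleGraph (Fin n) :=
  SimpleGraph.fromRel (fun x y => jacoArc f (x.1 + 1) (y.1 + 1))

noncomputable instance (f : ℕ → ℕ) (n : ℕ) : DecidableRel (jacoGraph f n).Adj := fun x y =>
  decidable_of_iff
    (x ≠ y ∧ (jacoArc f (x.1 + 1) (y.1 + 1) ∨ jacoArc f (y.1 + 1) (x.1 + 1)))
    (by unfold jacoGraph; exact (SimpleGraph.fromRel_adj (fun a b : Fin n => jacoArc f (a.1 + 1) (b.1 + 1)) x y).symm)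

theorem jacoIn_eq (f : ℕ → ℕ) (j : ℕ) :
    jacoIn f j = ((Finset.Ico 1 j).filter (fun i => j ≤ i + f i - jacoIn f i)).card := by
  have h : jacoIn f j = (((Finset.Ico 1 j).attach).filter
      (fun i : {x // x ∈ Finset.Ico 1 j} => j ≤ i.1 + f i.1 - jacoIn f i.1)).card := by
    conv_lhs => unfold jacoIn
    rw [Nat.strongRecOn_eq]
    rfl
  rw [h]
  refine Finset.card_bij (fun x _ => x.1) ?_ ?_ ?_
  · intro x hx
    simp only [Finset.mem_filter] at hx ⊢
    exact ⟨x.2, hx.2⟩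
  · intro x _ y _ hxy
    exact Subtype.ext hxy
  · intro y hy
    simp only [Finset.mem_filter] at hy
    exact ⟨⟨y, hy.1⟩, by simp [hy.2], rfl⟩

theorem jacoIn_le (f : ℕ → ℕ) (j : ℕ) : jacoIn f j ≤ j - 1 := by
  rw [jacoIn_eq]
  exact (Finset.card_filter_le _ _).trans (by simp)

theorem jacoIn_succ_le (f : ℕ → ℕ) (j : ℕ) : jacoIn f (j + 1) ≤ jacoIn f j + 1 := by
  rw [jacoIn_eq f (j + 1), jacoIn_eq f j]
  refine le_trans (Finset.card_le_card ?_) (Finset.card_insert_le j _)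
  intro k hk
  simp only [Finset.mem_filter, Finset.mem_Ico, Finset.mem_insert] at hk ⊢
  omega

theorem jacoIn_le_succ (f : ℕ → ℕ) (hf : ∀ k, f k < f (k + 1)) (j : ℕ) :
    jacoIn f j ≤ jacoIn f (j + 1) := by
  rw [jacoIn_eq f (j + 1), jacoIn_eq f j]
  refine Finset.card_le_card_of_injOn (fun k => k + 1) ?_ (fun x _ y _ h => by simpa using h)
  intro k hk
  simp only [Finset.coe_filter, Set.mem_ofPred_eq, Finset.mem_Ico] at hk ⊢
  have h1 := jacoIn_succ_le f k
  have h2 := hf k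
  have h3 := jacoIn_le f k
  omega

theorem jaco_degree (f : ℕ → ℕ) (n j : ℕ) (hj : j < n) :
    (jacoGraph f n).degree ⟨j, hj⟩ =
      jacoIn f (j + 1) + (min n (j + 1 + f (j + 1) - jacoIn f (j + 1)) - (j + 1)) := by
  rw [← SimpleGraph.card_neighborFinset_eq_degree]
  have e : ((jacoGraph f n).neighborFinset ⟨j, hj⟩).image (fun x : Fin n => x.1 + 1) =
      ((Finset.Ico 1 (j + 1)).filter (fun i => j + 1 ≤ i + f i - jacoIn f i)) ∪
      Finset.Ioc (j + 1) (min n (j + 1 + f (j + 1) - jacoIn f (j + 1))) := by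
    ext k
    simp only [Finset.mem_image, SimpleGraph.mem_neighborFinset]
    simp only [jacoGraph, SimpleGraph.fromRel_adj, jacoArc, Finset.mem_union, Finset.mem_filter, Finset.mem_Ico,
      Finset.mem_Ioc, ne_eq, le_min_iff]
    constructor
    · rintro ⟨x, ⟨_, h | h⟩, rfl⟩
      · right
        have := x.2
        omega
      · left
        omega
    · rintro (h | h)
      · refine ⟨⟨k - 1, by omega⟩, ⟨?_, Or.inr ?_⟩, ?_⟩
        · simp only [Fin.mk.injEq]
          omega
        · have : k - 1 + 1 = k := by omega
          simp only [this]
          omega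
        · simp only
          omega
      · refine ⟨⟨k - 1, by omega⟩, ⟨?_, Or.inl ?_⟩, ?_⟩
        · simp only [Fin.mk.injEq]
          omega
        · have : k - 1 + 1 = k := by omega
          simp only [this]
          omega
        · simp only
          omega
  have inj : Function.Injective (fun x : Fin n => x.1 + 1) := by
    intro x y h
    exact Fin.ext (by simpa using h)
  rw [← Finset.card_image_of_injective _ inj, e, Finset.card_union_of_disjoint, ← jacoIn_eq,
    Nat.card_Ioc]
  rw [Finset.disjoint_left]
  intro k hk hk2
  simp only [Finset.mem_filter, Finset.mem_Ico, Finset.mem_Ioc] at hk hk2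
  omega

/-- For `f(x) = a·x² + b·x + c` (`a ≥ 1`, `b, c ≥ 0`), `n ≥ 2`, and any
consecutive vertices `v_{i−1}, v_i` (`2 ≤ i ≤ n`) of the q-Jaco graph `J_n(f)`, the
degrees in the underlying graph satisfy `|d(v_i) − d(v_{i−1})| ≤ a·(2i − 1) + b`.
(Vertex `v_j` is represented by `⟨j - 1, _⟩ : Fin n`.) -/
theorem qJaco_consecutive_degree_difference (a b c n : ℕ) (ha : 1 ≤ a) (hn : 2 ≤ n)
    (i : ℕ) (hi : 2 ≤ i) (hin : i ≤ n) :
    |((jacoGraph (fun x => a * x ^ 2 + b * x + c) n).degree ⟨i - 1, by omega⟩ : ℤ) -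
      ((jacoGraph (fun x => a * x ^ 2 + b * x + c) n).degree ⟨i - 2, by omega⟩ : ℤ)| ≤
      (a : ℤ) * (2 * (i : ℤ) - 1) + (b : ℤ) := by
  obtain ⟨m, rfl⟩ : ∃ m, i = m + 2 := ⟨i - 2, by omega⟩
  set f : ℕ → ℕ := fun x => a * x ^ 2 + b * x + c with hfd
  have hf' : ∀ k, f (k + 1) = f k + (a * (2 * k + 1) + b) := by
    intro k
    simp only [hfd]
    ring
  have hf : ∀ k, f k < f (k + 1) := by
    intro k
    rw [hf' k]
    have : 0 < a * (2 * k + 1) := by positivity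
    omega
  have hk : ∀ k, k ≤ f k := by
    intro k
    induction k with
    | zero => omega
    | succ k ih => have := hf k; omega
  have d1 := jaco_degree f n (m + 1) (by omega)
  have d2 := jaco_degree f n m (by omega)
  have e1 : (jacoGraph f n).degree ⟨m + 2 - 1, by omega⟩ =
    (jacoGraph f n).degree ⟨m + 1, by omega⟩ := rfl
  have e2 : (jacoGraph f n).degree ⟨m + 2 - 2, by omega⟩ =
    (jacoGraph f n).degree ⟨m, by omega⟩ := rfl
  rw [e1, e2, d1, d2]
  have i1 := jacoIn_le f (m + 1)
  have i2 := jacoIn_le f (m + 1 + 1)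
  have i3 := jacoIn_succ_le f (m + 1)
  have i4 := jacoIn_le_succ f hf (m + 1)
  have k1 := hk (m + 1)
  have k2 := hk (m + 1 + 1)
  have hD := hf' (m + 1)
  have h0 := hf (m + 1)
  have hc : (a : ℤ) * (2 * ((m + 2 : ℕ) : ℤ) - 1) + (b : ℤ) =
      ((a * (2 * (m + 1) + 1) + b : ℕ) : ℤ) := by
    push_cast
    ring
  rw [hc]
  generalize a * (2 * (m + 1) + 1) + b = D at *
  clear_value f
  rw [abs_le]
  constructor <;> omega
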